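/- Let P be a range-restricted CHR program. If the ω! state ⟨𝔾; ∅; 𝔹; 𝕍⟩ derives in finitely many ω! transition steps to ⟨𝕃; ℙ; 𝔹'; 𝕍⟩, then for every natural number N there exists an ωe state ⟨𝔾'; 𝔹'; 𝕍⟩ such that ⟨𝔾; 𝔹; 𝕍⟩ derives in finitely many ωe transition steps to ⟨𝔾'; 𝔹'; 𝕍⟩ and the multiset 𝕃 ⊎ N·ℙ (the linear store together with N copies of every persistent constraint) is a sub-multiset of 𝔾'. (Soundness of ω! with respect to ωe.) -/

import Mathlib

set_option autoImplicit false

/-! ## Syntax: variables, terms, constraints -/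

/-- Variables -/
abbrev Var := ℕ

/-- First-order terms -/
inductive Term : Type
  | var : Var → Term
  | app : String → List Term → Term

mutual
  /-- Application of a substitution to a term -/
  def Term.subst (ρ : Var → Term) : Term → Term
    | .var x => ρ x
    | .app f ts => .app f (Term.substList ρ ts)
  /-- Application of a substitution to a list of terms -/
  def Term.substList (ρ : Var → Term) : List Term → List Term
    | [] => []
    | t :: ts => Term.subst ρ t :: Term.substList ρ ts
end

mutual
  /-- Variables occurring in a term -/
  def Term.varList : Term → List Var
    | .var x => [x]
    | .app _ ts => Term.varLists ts
  /-- Variables occurring in a list of terms -/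
  def Term.varLists : List Term → List Var
    | [] => []
    | t :: ts => Term.varList t ++ Term.varLists ts
end

/-- User-defined (CHR) constraints -/
structure UserC where
  name : String
  args : List Term

def UserC.subst (ρ : Var → Term) (c : UserC) : UserC := ⟨c.name, Term.substList ρ c.args⟩
def UserC.varList (c : UserC) : List Var := Term.varLists c.args

/-- Built-in constraints: syntactic equality `≐`, theory-interpreted predicates, and falsum `⊥`.
    The empty conjunction plays the role of `⊤`. -/
inductive BAtom : Type
  | eq : Term → Term → BAtom
  | pred : String → List Term → BAtom
  | bfalse : BAtom

def BAtom.subst (ρ : Var → Term) : BAtom → BAtom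
  | .eq s t => .eq (s.subst ρ) (t.subst ρ)
  | .pred p ts => .pred p (Term.substList ρ ts)
  | .bfalse => .bfalse

def BAtom.varList : BAtom → List Var
  | .eq s t => s.varList ++ t.varList
  | .pred _ ts => Term.varLists ts
  | .bfalse => []

/-- A user-defined constraint store: a multiset of CHR constraints -/
abbrev UStore := Multiset UserC
/-- A built-in constraint store: a conjunction (multiset) of built-in atoms -/
abbrev BStore := Multiset BAtom

def UStore.vars (G : UStore) : Set Var := {x | ∃ c ∈ G, x ∈ c.varList}
def BStore.vars (B : BStore) : Set Var := {x | ∃ a ∈ B, x ∈ a.varList}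
def UStore.subst (ρ : Var → Term) (G : UStore) : UStore := G.map (UserC.subst ρ)

/-- The single substitution [X/t] -/
def single (X : Var) (t : Term) : Var → Term := fun y => if y = X then t else .var y

/-- The falsum built-in store `⊥` -/
def botStore : BStore := {BAtom.bfalse}

/-! ## The constraint theory CT -/

/-- A constraint theory: an interpretation of the built-in predicate symbols over the
    term model; `≐` is interpreted as syntactic equality and `⊥` as falsity. -/
structure CTheory where
  interp : String → List Term → Prop

/-- Satisfaction of a built-in atom under a valuation `ρ` -/
def CTheory.satAtom (I : CTheory) (ρ : Var → Term) : BAtom → Prop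
  | .eq s t => s.subst ρ = t.subst ρ
  | .pred p ts => I.interp p (Term.substList ρ ts)
  | .bfalse => False

/-- Satisfaction of a conjunction of built-in atoms -/
def CTheory.sat (I : CTheory) (ρ : Var → Term) (B : BStore) : Prop := ∀ a ∈ B, I.satAtom ρ a

/-- `CT ⊨ ∃ S. B ↔ ∃ S'. B'` : the stores `B`, `B'` are equivalent up to
    existential quantification of the variable sets `S`, `S'` respectively. -/
def CTheory.equivUpTo (I : CTheory) (S S' : Set Var) (B B' : BStore) : Prop :=
  ∀ ρ : Var → Term,
    (∃ ρ', (∀ x ∉ S, ρ' x = ρ x) ∧ I.sat ρ' B) ↔ (∃ ρ', (∀ x ∉ S', ρ' x = ρ x) ∧ I.sat ρ' B')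

/-! ## CHR rules and programs -/

/-- A CHR rule `r @ kept \ removed ⇔ guard | bodyC, bodyB`.
    A propagation rule is one with `removed = []`. -/
structure Rule where
  kept : List UserC
  removed : List UserC
  guard : List BAtom
  bodyC : List UserC
  bodyB : List BAtom

def ucsVarList (l : List UserC) : List Var := (l.map UserC.varList).flatten
def basVarList (l : List BAtom) : List Var := (l.map BAtom.varList).flatten

/-- All variables of a rule -/
def Rule.vars (r : Rule) : Set Var :=
  {x | x ∈ ucsVarList (r.kept ++ r.removed ++ r.bodyC) ++ basVarList (r.guard ++ r.bodyB)}

/-- The local variables of a rule: those of guard and body not occurring in the heads -/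
def Rule.localVars (r : Rule) : Set Var :=
  {x | x ∈ basVarList r.guard ++ ucsVarList r.bodyC ++ basVarList r.bodyB} \
    {x | x ∈ ucsVarList (r.kept ++ r.removed)}

/-- A rule is range-restricted iff it has no local variables -/
def Rule.RangeRestricted (r : Rule) : Prop := r.localVars = ∅

def Rule.map (θ : Var → Term) (r : Rule) : Rule :=
  ⟨r.kept.map (UserC.subst θ), r.removed.map (UserC.subst θ), r.guard.map (BAtom.subst θ),
   r.bodyC.map (UserC.subst θ), r.bodyB.map (BAtom.subst θ)⟩

/-- `r'` is a variant of `r`: it is obtained from `r` by renaming its variables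
    with pairwise distinct variables -/
def Rule.IsVariantOf (r' r : Rule) : Prop :=
  ∃ ρ : Var → Var, Set.InjOn ρ r.vars ∧ r' = r.map (fun x => Term.var (ρ x))

/-- A CHR program is a set of rules -/
abbrev Program := Set Rule
def Program.RangeRestricted (P : Program) : Prop := ∀ r ∈ P, r.RangeRestricted

/-! ## The equivalence-based operational semantics ωe -/

/-- An ωe state `⟨𝔾; 𝔹; 𝕍⟩` -/
structure StateE where
  uds : UStore
  bis : BStore
  glob : Set Var

/-- ωe state equivalence `≡e`: the smallest equivalence relation satisfying
    (1) equality as substitution, (2) CT-equivalent transformation of the built-in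
    store up to strictly local variables, (3) omission of non-occurring global
    variables, (4) equivalence of failed states. -/
inductive EquivE (I : CTheory) : StateE → StateE → Prop
  | refl (σ : StateE) : EquivE I σ σ
  | symm {σ τ : StateE} : EquivE I σ τ → EquivE I τ σ
  | trans {σ τ υ : StateE} : EquivE I σ τ → EquivE I τ υ → EquivE I σ υ
  | substEq (G : UStore) (B : BStore) (V : Set Var) (X : Var) (t : Term) :
      EquivE I ⟨G, BAtom.eq (.var X) t ::ₘ B, V⟩
               ⟨UStore.subst (single X t) G, BAtom.eq (.var X) t ::ₘ B, V⟩
  | builtin (G : UStore) (B B' : BStore) (V : Set Var) :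
      I.equivUpTo (BStore.vars B \ (V ∪ UStore.vars G))
                  (BStore.vars B' \ (V ∪ UStore.vars G)) B B' →
      EquivE I ⟨G, B, V⟩ ⟨G, B', V⟩
  | globalDrop (G : UStore) (B : BStore) (V : Set Var) (X : Var) :
      X ∉ UStore.vars G → X ∉ BStore.vars B →
      EquivE I ⟨G, B, insert X V⟩ ⟨G, B, V⟩
  | failed (G G' : UStore) (V : Set Var) : EquivE I ⟨G, botStore, V⟩ ⟨G', botStore, V⟩

/-- The ωe transition relation `↦e` (on `≡e`-equivalence classes, represented by
    states linked via `≡e` on both ends): application of a variant of a program rule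
    whose local variables are fresh for the pre-transition state. -/
inductive StepE (I : CTheory) (P : Program) : StateE → StateE → Prop
  | mk (σ τ : StateE) (r r' : Rule) (rest : UStore) (B : BStore) (V : Set Var) :
      r ∈ P → r'.IsVariantOf r →
      Disjoint r'.localVars (UStore.vars rest ∪ BStore.vars B ∪ V) →
      EquivE I σ ⟨↑r'.kept + ↑r'.removed + rest, ↑r'.guard + B, V⟩ →
      EquivE I ⟨↑r'.kept + ↑r'.bodyC + rest, ↑r'.guard + ↑r'.bodyB + B, V⟩ τ →
      StepE I P σ τ

/-! ## The operational semantics ω! with persistent constraints -/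

/-- An ω! state `⟨𝕃; ℙ; 𝔹; 𝕍⟩` with linear store `𝕃` and persistent store `ℙ` -/
structure StateB where
  lin : UStore
  per : UStore
  bis : BStore
  glob : Set Var

/-- ω! state equivalence `≡!`: the analogues of the `≡e` conditions (substitution
    acting on both stores, all failed states equivalent) together with contraction
    of the persistent store. -/
inductive EquivB (I : CTheory) : StateB → StateB → Prop
  | refl (σ : StateB) : EquivB I σ σ
  | symm {σ τ : StateB} : EquivB I σ τ → EquivB I τ σ
  | trans {σ τ υ : StateB} : EquivB I σ τ → EquivB I τ υ → EquivB I σ υ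
  | substEq (L P : UStore) (B : BStore) (V : Set Var) (X : Var) (t : Term) :
      EquivB I ⟨L, P, BAtom.eq (.var X) t ::ₘ B, V⟩
               ⟨UStore.subst (single X t) L, UStore.subst (single X t) P,
                BAtom.eq (.var X) t ::ₘ B, V⟩
  | builtin (L P : UStore) (B B' : BStore) (V : Set Var) :
      I.equivUpTo (BStore.vars B \ (V ∪ UStore.vars L ∪ UStore.vars P))
                  (BStore.vars B' \ (V ∪ UStore.vars L ∪ UStore.vars P)) B B' →
      EquivB I ⟨L, P, B, V⟩ ⟨L, P, B', V⟩
  | globalDrop (L P : UStore) (B : BStore) (V : Set Var) (X : Var) :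
      X ∉ UStore.vars L → X ∉ UStore.vars P → X ∉ BStore.vars B →
      EquivB I ⟨L, P, B, insert X V⟩ ⟨L, P, B, V⟩
  | failed (L P L' P' : UStore) (V V' : Set Var) :
      EquivB I ⟨L, P, botStore, V⟩ ⟨L', P', botStore, V'⟩
  | contract (L Q P : UStore) (B : BStore) (V : Set Var) :
      EquivB I ⟨L, Q + Q + P, B, V⟩ ⟨L, Q + P, B, V⟩

/-- The ω! transition relation `↦!` (on `≡!`-classes): **ApplyLinear** and
    **ApplyPersistent**, each subject to the irreflexivity condition `[σ] ≠ [τ]`. -/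
inductive StepB (I : CTheory) (P : Program) : StateB → StateB → Prop
  | applyLinear (σ τ : StateB) (r r' : Rule) (H1l H1p H2l H2p rest perRest : UStore)
      (B : BStore) (V : Set Var) :
      r ∈ P → r'.IsVariantOf r →
      (↑r'.kept : UStore) = H1l + H1p → (↑r'.removed : UStore) = H2l + H2p → H2l ≠ 0 →
      Disjoint r'.localVars
        (UStore.vars rest ∪ UStore.vars perRest ∪ BStore.vars B ∪ V) →
      EquivB I σ ⟨H1l + H2l + rest, H1p + H2p + perRest, ↑r'.guard + B, V⟩ →
      EquivB I ⟨H1l + ↑r'.bodyC + rest, H1p + H2p + perRest,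
                ↑r'.guard + B + ↑r'.bodyB, V⟩ τ →
      ¬ EquivB I σ τ →
      StepB I P σ τ
  | applyPersistent (σ τ : StateB) (r r' : Rule) (H1l H1p rest perRest : UStore)
      (B : BStore) (V : Set Var) :
      r ∈ P → r'.IsVariantOf r →
      (↑r'.kept : UStore) = H1l + H1p →
      Disjoint r'.localVars
        (UStore.vars rest ∪ UStore.vars perRest ∪ BStore.vars B ∪ V) →
      EquivB I σ ⟨H1l + rest, H1p + ↑r'.removed + perRest, ↑r'.guard + B, V⟩ →
      EquivB I ⟨H1l + rest, H1p + ↑r'.removed + ↑r'.bodyC + perRest,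
                ↑r'.guard + B + ↑r'.bodyB, V⟩ τ →
      ¬ EquivB I σ τ →
      StepB I P σ τ

/-!
An `ω!` state `⟨𝕃; ℙ; 𝔹; 𝕍⟩` stands for all the `ωe` states `⟨𝕃 ⊎ Q; 𝔹; 𝕍⟩` in which `Q` contains
many copies of every constraint of `ℙ` and no other constraint. Each `ω!` step is simulated by
finitely many `ωe` steps at the price of some copies: reaching `N` copies afterwards takes some
larger number `M` of copies before. A linear step uses up one copy of `ℙ`. In a persistent step
with a range-restricted rule the rule is fired `N + 1` times, which yields `N + 1` copies of its
body; the built-in body is the same each time, so adding it repeatedly changes nothing.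

Failed states are all equivalent in `ω!`, whatever their global variables, but not in `ωe`. By the
irreflexivity of `↦!` no derivation continues from a failed state, so only the last state of a
derivation can fail, and there the global variables are again those of the initial state.
-/

/-! ## Inflations of multisets -/

/-- `t` is an `N`-fold inflation of `s`: it has the same elements as `s` and contains at least `N`
copies of `s`. The inflations of a persistent store are the linear stores that can stand in
for it. Equality of supports keeps the variables, hence the strictly local ones, unchanged. -/
structure IsInflation {α : Type*} (N : ℕ) (s t : Multiset α) : Prop where
  mem_iff : ∀ a, a ∈ t ↔ a ∈ s
  nsmul_le : N • s ≤ t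

namespace IsInflation

variable {α β : Type*} {N k : ℕ} {s s' t t' u : Multiset α}

theorem succ_nsmul_self (N : ℕ) (s : Multiset α) : IsInflation N s ((N + 1) • s) where
  mem_iff a := by simp [Multiset.mem_nsmul]
  nsmul_le := nsmul_le_nsmul_left (Multiset.zero_le s) N.le_succ

theorem add (h : IsInflation N s t) (h' : IsInflation N s' t') :
    IsInflation N (s + s') (t + t') where
  mem_iff a := by simp only [Multiset.mem_add, h.mem_iff, h'.mem_iff]
  nsmul_le := by
    rw [nsmul_add]
    exact add_le_add h.nsmul_le h'.nsmul_le

theorem add_right_of_subset (h : IsInflation N s t) (hu : u ⊆ s) : IsInflation N s (t + u) where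
  mem_iff a := by
    rw [Multiset.mem_add, h.mem_iff]
    exact or_iff_left_of_imp fun ha => hu ha
  nsmul_le := h.nsmul_le.trans (Multiset.le_add_right t u)

theorem of_le_nsmul (h : IsInflation (N * k) s t) (hle : s' ≤ k • s) (hss' : s ⊆ s') :
    IsInflation N s' t where
  mem_iff a := by
    rw [h.mem_iff]
    exact ⟨fun ha => hss' ha, fun ha => Multiset.mem_of_mem_nsmul (Multiset.mem_of_le hle ha)⟩
  nsmul_le := calc
    N • s' ≤ N • k • s := nsmul_le_nsmul_right hle N
    _ = (N * k) • s := (mul_nsmul' s N k).symm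
    _ ≤ t := h.nsmul_le

theorem exists_eq_nsmul_add (h : IsInflation (k + N + 1) s t) :
    ∃ u, t = k • s + u ∧ IsInflation N s u := by
  obtain ⟨w, rfl⟩ := Multiset.le_iff_exists_add.1 h.nsmul_le
  have hw : w ⊆ s := fun a ha => (h.mem_iff a).1 (Multiset.mem_add.2 (.inr ha))
  exact ⟨(N + 1) • s + w, by module, (succ_nsmul_self N s).add_right_of_subset hw⟩

theorem map (f : α → β) (h : IsInflation N s t) : IsInflation N (s.map f) (t.map f) where
  mem_iff b := by simp only [Multiset.mem_map, h.mem_iff]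
  nsmul_le := by
    rw [← Multiset.map_nsmul]
    exact Multiset.map_le_map h.nsmul_le

end IsInflation

theorem exists_map_eq_of_subset_map {α β : Type*} {f : α → β} {s : Multiset α} {t : Multiset β}
    (h : t ⊆ s.map f) : ∃ u ⊆ s, u.map f = t := by
  choose g hgs hfg using fun b : {b // b ∈ t} => Multiset.mem_map.1 (h b.2)
  refine ⟨t.attach.map g, fun a ha => ?_, ?_⟩
  · obtain ⟨b, -, rfl⟩ := Multiset.mem_map.1 ha
    exact hgs b
  · simp only [Multiset.map_map, Function.comp_def, hfg, Multiset.attach_map_val]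

theorem IsInflation.exists_map_eq {α β : Type*} {N : ℕ} {f : α → β} {s : Multiset α}
    {t : Multiset β} (h : IsInflation (N + 2) (s.map f) t) :
    ∃ u, IsInflation N s u ∧ u.map f = t := by
  obtain ⟨v, rfl, hv⟩ := IsInflation.exists_eq_nsmul_add (k := N + 1) (N := 0) h
  obtain ⟨w, hws, rfl⟩ := exists_map_eq_of_subset_map fun b hb => (hv.mem_iff b).1 hb
  exact ⟨(N + 1) • s + w, (succ_nsmul_self N s).add_right_of_subset hws, by
    rw [Multiset.map_add, Multiset.map_nsmul]⟩

/-! ## Variables and variants -/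

theorem UStore.vars_add (G H : UStore) :
    UStore.vars (G + H) = UStore.vars G ∪ UStore.vars H := by
  ext x
  simp [UStore.vars, or_and_right, exists_or]

theorem IsInflation.vars_eq {N : ℕ} {G H : UStore} (h : IsInflation N G H) :
    UStore.vars H = UStore.vars G := by
  simp only [UStore.vars, h.mem_iff]

mutual
  theorem Term.varList_subst_var (ρ : Var → Var) : ∀ t : Term,
      (t.subst fun x => .var (ρ x)).varList = t.varList.map ρ
    | .var x => by simp [Term.subst, Term.varList]
    | .app f ts => by simpa only [Term.subst, Term.varList] using Term.varLists_substList_var ρ ts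
  theorem Term.varLists_substList_var (ρ : Var → Var) : ∀ ts : List Term,
      Term.varLists (Term.substList (fun x => .var (ρ x)) ts) = (Term.varLists ts).map ρ
    | [] => rfl
    | t :: ts => by
      simp only [Term.substList, Term.varLists, List.map_append,
        Term.varList_subst_var ρ t, Term.varLists_substList_var ρ ts]
end

theorem BAtom.varList_subst_var (ρ : Var → Var) (a : BAtom) :
    (a.subst fun x => .var (ρ x)).varList = a.varList.map ρ := by
  cases a <;>
    simp [BAtom.subst, BAtom.varList, Term.varList_subst_var, Term.varLists_substList_var]

theorem ucsVarList_map_subst_var (ρ : Var → Var) (l : List UserC) :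
    ucsVarList (l.map (UserC.subst fun x => .var (ρ x))) = (ucsVarList l).map ρ := by
  simp only [ucsVarList, List.map_map, List.map_flatten, Function.comp_def, UserC.varList,
    UserC.subst, Term.varLists_substList_var]

theorem basVarList_map_subst_var (ρ : Var → Var) (l : List BAtom) :
    basVarList (l.map (BAtom.subst fun x => .var (ρ x))) = (basVarList l).map ρ := by
  simp only [basVarList, List.map_map, List.map_flatten, Function.comp_def,
    BAtom.varList_subst_var]

theorem Rule.localVars_map_var_subset (ρ : Var → Var) (r : Rule) :
    (r.map fun x => .var (ρ x)).localVars ⊆ ρ '' r.localVars := by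
  rintro x ⟨hbody, hhead⟩
  simp only [Rule.map, ← List.map_append, ucsVarList_map_subst_var, basVarList_map_subst_var,
    Set.mem_ofPred_eq] at hbody hhead
  obtain ⟨y, hy, rfl⟩ := List.mem_map.1 hbody
  exact ⟨y, ⟨hy, fun hy' => hhead (List.mem_map_of_mem hy')⟩, rfl⟩

theorem Rule.IsVariantOf.rangeRestricted {r r' : Rule} (hv : r'.IsVariantOf r)
    (h : r.RangeRestricted) : r'.RangeRestricted := by
  obtain ⟨ρ, -, rfl⟩ := hv
  have hsub := r.localVars_map_var_subset ρ
  rw [h, Set.image_empty] at hsub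
  exact Set.subset_empty_iff.1 hsub

/-! ## Failed states -/

/-- The built-in store `B` has no solution in the constraint theory `I`; the states with such a
store are the failed ones. -/
def CTheory.Unsat (I : CTheory) (B : BStore) : Prop := ∀ ρ, ¬ I.sat ρ B

section Failed

variable {I : CTheory} {P : Program} {S S' : Set Var} {B B' : BStore}

theorem CTheory.unsat_botStore (I : CTheory) : I.Unsat botStore :=
  fun _ h => h _ (Multiset.mem_singleton_self _)

theorem CTheory.Unsat.mono (h : I.Unsat B) (hBB' : B ⊆ B') : I.Unsat B' :=
  fun ρ hρ => h ρ fun a ha => hρ a (hBB' ha)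

theorem CTheory.Unsat.equivUpTo (h : I.Unsat B) (h' : I.Unsat B') : I.equivUpTo S S' B B' :=
  fun _ => iff_of_false (fun ⟨ρ, _, hρ⟩ => h ρ hρ) (fun ⟨ρ, _, hρ⟩ => h' ρ hρ)

theorem CTheory.equivUpTo.symm (h : I.equivUpTo S S' B B') : I.equivUpTo S' S B' B :=
  fun ρ => (h ρ).symm

theorem CTheory.equivUpTo.unsat (h : I.equivUpTo S S' B B') (hB : I.Unsat B) : I.Unsat B' := by
  intro ρ hρ
  obtain ⟨ρ', -, hρ'⟩ := (h ρ).2 ⟨ρ, fun _ _ => rfl, hρ⟩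
  exact hB ρ' hρ'

theorem EquivB.unsat_iff {σ τ : StateB} (h : EquivB I σ τ) :
    I.Unsat σ.bis ↔ I.Unsat τ.bis := by
  induction h with
  | symm _ ih => exact ih.symm
  | trans _ _ ih₁ ih₂ => exact ih₁.trans ih₂
  | builtin L P B B' V h => exact ⟨h.unsat, h.symm.unsat⟩
  | refl | substEq | globalDrop | failed | contract => exact Iff.rfl

theorem EquivB.of_unsat {σ τ : StateB} (hσ : I.Unsat σ.bis) (hτ : I.Unsat τ.bis) :
    EquivB I σ τ :=
  .trans (.builtin _ _ _ botStore _ (hσ.equivUpTo I.unsat_botStore)) <|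
    .trans (.failed _ _ _ _ _ _) (.builtin _ _ _ _ _ (I.unsat_botStore.equivUpTo hτ))

theorem EquivE.of_unsat (G G' : UStore) (V : Set Var) (hB : I.Unsat B) (hB' : I.Unsat B') :
    EquivE I ⟨G, B, V⟩ ⟨G', B', V⟩ :=
  .trans (.builtin _ _ botStore _ (hB.equivUpTo I.unsat_botStore)) <|
    .trans (.failed _ _ _) (.builtin _ _ _ _ (I.unsat_botStore.equivUpTo hB'))

theorem EquivE.equivE_botStore {σ τ : StateE} (h : EquivE I σ τ) :
    EquivE I ⟨0, botStore, σ.glob⟩ ⟨0, botStore, τ.glob⟩ := by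
  induction h with
  | symm _ ih => exact ih.symm
  | trans _ _ ih₁ ih₂ => exact ih₁.trans ih₂
  | globalDrop =>
    refine .globalDrop _ _ _ _ ?_ ?_ <;>
      simp [UStore.vars, BStore.vars, botStore, BAtom.varList]
  | refl | substEq | builtin | failed => exact .refl _

theorem StepE.equivE_botStore {σ τ : StateE} (h : StepE I P σ τ) :
    EquivE I ⟨0, botStore, σ.glob⟩ ⟨0, botStore, τ.glob⟩ := by
  cases h with
  | mk r r' rest B V _ _ _ hσ hτ => exact hσ.equivE_botStore.trans hτ.equivE_botStore

theorem StepB.not_unsat {σ τ : StateB} (h : StepB I P σ τ) : ¬ I.Unsat σ.bis := by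
  intro hσ
  cases h with
  | applyLinear r r' H1l H1p H2l H2p rest perRest B V _ _ _ _ _ _ hσπ hπτ hne
  | applyPersistent r r' H1l H1p rest perRest B V _ _ _ _ hσπ hπτ hne =>
    have hτ := hπτ.unsat_iff.1 <|
      (hσπ.unsat_iff.1 hσ).mono (Multiset.subset_of_le (Multiset.le_add_right _ _))
    exact hne (.of_unsat hσ hτ)

end Failed

/-! ## Derivations in `ωe` -/

section Derivations

open Relation

variable {I : CTheory} {P : Program} {r r' : Rule}

instance : Trans (EquivE I) (EquivE I) (EquivE I) := ⟨.trans⟩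

instance : Trans (EquivE I) (StepE I P) (StepE I P) where
  trans := by
    intro σ _ _ h hstep
    cases hstep with
    | mk r r' rest B V hr hv hfresh hσ hτ =>
      exact .mk _ _ r r' rest B V hr hv hfresh (h.trans hσ) hτ

instance : Trans (StepE I P) (EquivE I) (StepE I P) where
  trans := by
    intro _ _ τ hstep h
    cases hstep with
    | mk r r' rest B V hr hv hfresh hσ hτ =>
      exact .mk _ _ r r' rest B V hr hv hfresh hσ (hτ.trans h)

instance : Trans (EquivE I) (TransGen (StepE I P)) (TransGen (StepE I P)) where
  trans h hs := by
    obtain ⟨_, hstep, hrest⟩ := TransGen.head'_iff.1 hs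
    exact TransGen.head' (Trans.trans h hstep) hrest

instance : Trans (TransGen (StepE I P)) (EquivE I) (TransGen (StepE I P)) where
  trans hs h := by
    obtain ⟨_, hrest, hstep⟩ := TransGen.tail'_iff.1 hs
    exact TransGen.tail' hrest (Trans.trans hstep h)

theorem equivE_botStore_of_transGen {σ τ : StateE} (h : TransGen (StepE I P) σ τ) :
    EquivE I ⟨0, botStore, σ.glob⟩ ⟨0, botStore, τ.glob⟩ := by
  induction h with
  | single hστ => exact hστ.equivE_botStore
  | tail _ hστ ih => exact ih.trans hστ.equivE_botStore

theorem transGen_stepE_of_unsat {σ τ : StateE} {B : BStore} (h : TransGen (StepE I P) σ τ)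
    (hτ : I.Unsat τ.bis) (hB : I.Unsat B) (G : UStore) :
    TransGen (StepE I P) σ ⟨G, B, σ.glob⟩ :=
  calc
    TransGen (StepE I P) σ τ := h
    EquivE I _ ⟨0, botStore, τ.glob⟩ := .of_unsat _ _ _ hτ I.unsat_botStore
    EquivE I _ ⟨0, botStore, σ.glob⟩ := (equivE_botStore_of_transGen h).symm
    EquivE I _ ⟨G, B, σ.glob⟩ := .of_unsat _ _ _ I.unsat_botStore hB

theorem EquivE.of_mem_iff (G : UStore) {B B' : BStore} (V : Set Var)
    (h : ∀ a, a ∈ B ↔ a ∈ B') : EquivE I ⟨G, B, V⟩ ⟨G, B', V⟩ := by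
  refine .builtin _ _ _ _ fun ρ => ?_
  simp only [CTheory.sat, BStore.vars, h]

theorem Program.RangeRestricted.stepE (hP : P.RangeRestricted) (hr : r ∈ P)
    (hv : r'.IsVariantOf r) (rest : UStore) (B : BStore) (V : Set Var) :
    StepE I P ⟨↑r'.kept + ↑r'.removed + rest, ↑r'.guard + B, V⟩
      ⟨↑r'.kept + ↑r'.bodyC + rest, ↑r'.guard + ↑r'.bodyB + B, V⟩ := by
  have hlocal : r'.localVars = ∅ := hv.rangeRestricted (hP r hr)
  exact .mk _ _ r r' rest B V hr hv (hlocal ▸ Set.empty_disjoint _) (.refl _) (.refl _)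

theorem Program.RangeRestricted.transGen_stepE_nsmul (hP : P.RangeRestricted) (hr : r ∈ P)
    (hv : r'.IsVariantOf r) (rest : UStore) (B : BStore) (V : Set Var) (k : ℕ) :
    TransGen (StepE I P)
      ⟨↑r'.kept + (k + 1) • (↑r'.removed : UStore) + rest, ↑r'.guard + B, V⟩
      ⟨↑r'.kept + (k + 1) • (↑r'.bodyC : UStore) + rest, ↑r'.guard + ↑r'.bodyB + B, V⟩ := by
  induction k generalizing rest with
  | zero => simpa using TransGen.single (hP.stepE hr hv rest B V)
  | succ k ih =>
    let removed : UStore := ↑r'.removed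
    let bodyC : UStore := ↑r'.bodyC
    calc
      TransGen (StepE I P)
          ⟨↑r'.kept + (k + 1 + 1) • removed + rest, ↑r'.guard + B, V⟩
          ⟨↑r'.kept + removed + (rest + (k + 1) • bodyC), ↑r'.guard + (↑r'.bodyB + B), V⟩ := by
        convert ih (removed + rest) using 2 <;> module
      StepE I P _
          ⟨↑r'.kept + bodyC + (rest + (k + 1) • bodyC),
            ↑r'.guard + ↑r'.bodyB + (↑r'.bodyB + B), V⟩ :=
        hP.stepE hr hv _ _ V
      EquivE I _
          ⟨↑r'.kept + bodyC + (rest + (k + 1) • bodyC), ↑r'.guard + ↑r'.bodyB + B, V⟩ :=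
        .of_mem_iff _ _ fun a => by simp only [Multiset.mem_add]; tauto
      _ = ⟨↑r'.kept + (k + 1 + 1) • bodyC + rest, ↑r'.guard + ↑r'.bodyB + B, V⟩ := by
        congr 1; module

end Derivations

/-! ## Simulation of `ω!` by `ωe` -/

/-- The `ωe` state obtained from an `ω!` state by letting the store `Q` stand in for the
persistent store. -/
def StateB.toStateE (σ : StateB) (Q : UStore) : StateE := ⟨σ.lin + Q, σ.bis, σ.glob⟩

/-- The relation `R` on `ωe` states simulates the passage from the `ω!` state `σ` to `τ`: for every
`N` there is an `M` such that every `M`-fold inflation of the persistent store of `σ` is related to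
some `N`-fold inflation of that of `τ`. -/
def Simulates (R : StateE → StateE → Prop) (σ τ : StateB) : Prop :=
  ∀ N, ∃ M, ∀ Q, IsInflation M σ.per Q →
    ∃ Q', IsInflation N τ.per Q' ∧ R (σ.toStateE Q) (τ.toStateE Q')

namespace Simulates

variable {R S T : StateE → StateE → Prop} {σ τ υ : StateB}

theorem trans [Trans R S T] (h : Simulates R σ τ) (h' : Simulates S τ υ) : Simulates T σ υ := by
  intro N
  obtain ⟨M, hM⟩ := h' N
  obtain ⟨K, hK⟩ := h M
  refine ⟨K, fun Q hQ => ?_⟩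
  obtain ⟨Q', hQ', hR⟩ := hK Q hQ
  obtain ⟨Q'', hQ'', hS⟩ := hM Q' hQ'
  exact ⟨Q'', hQ'', Trans.trans hR hS⟩

theorem of_per_le_nsmul (k : ℕ) (hle : τ.per ≤ k • σ.per) (hsub : σ.per ⊆ τ.per)
    (h : ∀ N Q, IsInflation N σ.per Q → R (σ.toStateE Q) (τ.toStateE Q)) : Simulates R σ τ :=
  fun N => ⟨N * k, fun Q hQ => ⟨Q, hQ.of_le_nsmul hle hsub, h _ Q hQ⟩⟩

theorem of_per_eq (hper : σ.per = τ.per)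
    (h : ∀ N Q, IsInflation N σ.per Q → R (σ.toStateE Q) (τ.toStateE Q)) : Simulates R σ τ :=
  of_per_le_nsmul 1 (by rw [one_nsmul, hper]) (hper ▸ Multiset.Subset.refl _) h

end Simulates

section Equivalence

variable {I : CTheory}

theorem simulates_equivE_subst (L P : UStore) (B : BStore) (V : Set Var) (X : Var) (t : Term) :
    Simulates (EquivE I) ⟨L, P, .eq (.var X) t ::ₘ B, V⟩
      ⟨UStore.subst (single X t) L, UStore.subst (single X t) P, .eq (.var X) t ::ₘ B, V⟩ := by
  refine fun N => ⟨N, fun Q hQ => ⟨UStore.subst (single X t) Q, hQ.map _, ?_⟩⟩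
  simpa only [StateB.toStateE, UStore.subst, Multiset.map_add] using
    EquivE.substEq (L + Q) B V X t

theorem simulates_equivE_subst_symm (L P : UStore) (B : BStore) (V : Set Var) (X : Var)
    (t : Term) :
    Simulates (EquivE I)
      ⟨UStore.subst (single X t) L, UStore.subst (single X t) P, .eq (.var X) t ::ₘ B, V⟩
      ⟨L, P, .eq (.var X) t ::ₘ B, V⟩ := by
  refine fun N => ⟨N + 2, fun Q hQ => ?_⟩
  obtain ⟨Q', hQ', rfl⟩ := hQ.exists_map_eq
  refine ⟨Q', hQ', .symm ?_⟩
  simpa only [StateB.toStateE, UStore.subst, Multiset.map_add] using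
    EquivE.substEq (L + Q') B V X t

theorem simulates_equivE_of_equivUpTo (L P : UStore) {B B' : BStore} (V : Set Var)
    (h : I.equivUpTo (BStore.vars B \ (V ∪ UStore.vars L ∪ UStore.vars P))
      (BStore.vars B' \ (V ∪ UStore.vars L ∪ UStore.vars P)) B B') :
    Simulates (EquivE I) ⟨L, P, B, V⟩ ⟨L, P, B', V⟩ := by
  refine .of_per_eq rfl fun N Q hQ => .builtin _ _ _ _ ?_
  rwa [UStore.vars_add, hQ.vars_eq, ← Set.union_assoc]

theorem EquivB.simulates_and_simulates {σ τ : StateB} (h : EquivB I σ τ)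
    (hσ : ¬ I.Unsat σ.bis) : Simulates (EquivE I) σ τ ∧ Simulates (EquivE I) τ σ := by
  induction h with
  | refl σ => exact ⟨.of_per_eq rfl fun _ _ _ => .refl _, .of_per_eq rfl fun _ _ _ => .refl _⟩
  | symm h ih => exact (ih (mt h.unsat_iff.1 hσ)).symm
  | trans h _ ih₁ ih₂ =>
    obtain ⟨h₁, h₁'⟩ := ih₁ hσ
    obtain ⟨h₂, h₂'⟩ := ih₂ (mt h.unsat_iff.2 hσ)
    exact ⟨h₁.trans h₂, h₂'.trans h₁'⟩
  | substEq L P B V X t =>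
    exact ⟨simulates_equivE_subst L P B V X t, simulates_equivE_subst_symm L P B V X t⟩
  | builtin L P B B' V h =>
    exact ⟨simulates_equivE_of_equivUpTo L P V h, simulates_equivE_of_equivUpTo L P V h.symm⟩
  | globalDrop L P B V X hL hP hB =>
    have hdrop : ∀ N Q, IsInflation N P Q → EquivE I ⟨L + Q, B, insert X V⟩ ⟨L + Q, B, V⟩ := by
      refine fun N Q hQ => .globalDrop _ _ _ _ ?_ hB
      rw [UStore.vars_add, hQ.vars_eq]
      exact fun h => h.elim hL hP
    exact ⟨.of_per_eq rfl hdrop, .of_per_eq rfl fun N Q hQ => (hdrop N Q hQ).symm⟩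
  | failed => exact absurd I.unsat_botStore hσ
  | contract L Q P B V =>
    constructor
    · refine .of_per_le_nsmul 1 ?_ (fun c => ?_) fun _ _ _ => .refl _
      · simp [add_assoc]
      · simp
    · refine .of_per_le_nsmul 2 ?_ (fun c => ?_) fun _ _ _ => .refl _
      · refine Multiset.le_iff_exists_add.2 ⟨P, ?_⟩
        simp only
        module
      · simp +contextual

theorem EquivB.simulates {σ τ : StateB} (h : EquivB I σ τ) (hσ : ¬ I.Unsat σ.bis) :
    Simulates (EquivE I) σ τ :=
  (h.simulates_and_simulates hσ).1

end Equivalence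

section Steps

open Relation

variable {I : CTheory} {P : Program} {r r' : Rule}

theorem Program.RangeRestricted.simulates_applyLinear (hP : P.RangeRestricted) (hr : r ∈ P)
    (hv : r'.IsVariantOf r) {H1l H1p H2l H2p : UStore} (rest perRest : UStore) (B : BStore)
    (V : Set Var) (hkept : (↑r'.kept : UStore) = H1l + H1p)
    (hremoved : (↑r'.removed : UStore) = H2l + H2p) :
    Simulates (TransGen (StepE I P))
      ⟨H1l + H2l + rest, H1p + H2p + perRest, ↑r'.guard + B, V⟩
      ⟨H1l + ↑r'.bodyC + rest, H1p + H2p + perRest, ↑r'.guard + B + ↑r'.bodyB, V⟩ := by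
  refine fun N => ⟨1 + N + 1, fun Q hQ => ?_⟩
  obtain ⟨Q₀, rfl, hQ₀⟩ := hQ.exists_eq_nsmul_add
  refine ⟨Q₀ + (H1p + perRest), hQ₀.add_right_of_subset fun c => ?_, ?_⟩
  · simp +contextual [or_imp]
  · have hstep := hP.stepE (I := I) hr hv (rest + perRest + Q₀) B V
    rw [hkept, hremoved] at hstep
    convert TransGen.single hstep using 1 <;> rw [StateB.toStateE] <;> congr 1 <;>
      module

theorem Program.RangeRestricted.simulates_applyPersistent (hP : P.RangeRestricted) (hr : r ∈ P)
    (hv : r'.IsVariantOf r) {H1l H1p : UStore} (rest perRest : UStore) (B : BStore)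
    (V : Set Var) (hkept : (↑r'.kept : UStore) = H1l + H1p) :
    Simulates (TransGen (StepE I P))
      ⟨H1l + rest, H1p + ↑r'.removed + perRest, ↑r'.guard + B, V⟩
      ⟨H1l + rest, H1p + ↑r'.removed + ↑r'.bodyC + perRest, ↑r'.guard + B + ↑r'.bodyB, V⟩ := by
  refine fun N => ⟨N + 1 + N + 1, fun Q hQ => ?_⟩
  obtain ⟨Q₀, rfl, hQ₀⟩ := hQ.exists_eq_nsmul_add
  refine ⟨Q₀ + (N + 1) • (r'.bodyC : UStore) + (N + 1) • (H1p + perRest), ?_, ?_⟩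
  · rw [add_right_comm (H1p + ↑r'.removed)]
    refine (hQ₀.add (.succ_nsmul_self N ↑r'.bodyC)).add_right_of_subset fun c hc => ?_
    have hc' : c ∈ H1p + perRest := Multiset.mem_of_mem_nsmul hc
    simp only [Multiset.mem_add] at hc' ⊢
    tauto
  · have hsteps := hP.transGen_stepE_nsmul (I := I) hr hv
      (rest + N • H1p + (N + 1) • perRest + Q₀) B V N
    rw [hkept] at hsteps
    convert hsteps using 1 <;> rw [StateB.toStateE] <;> congr 1 <;> module

theorem StepB.exists_simulates (hP : P.RangeRestricted) {σ τ : StateB} (h : StepB I P σ τ) :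
    ∃ π, Simulates (TransGen (StepE I P)) σ π ∧ EquivB I π τ := by
  have hσ := h.not_unsat
  cases h with
  | applyLinear r r' H1l H1p H2l H2p rest perRest B V hr hv hkept hremoved _ _ hσπ hπτ =>
    exact ⟨_, (hσπ.simulates hσ).trans
      (hP.simulates_applyLinear (I := I) hr hv rest perRest B V hkept hremoved), hπτ⟩
  | applyPersistent r r' H1l H1p rest perRest B V hr hv hkept _ hσπ hπτ =>
    exact ⟨_, (hσπ.simulates hσ).trans
      (hP.simulates_applyPersistent (I := I) hr hv rest perRest B V hkept), hπτ⟩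

theorem exists_simulates_of_transGen (hP : P.RangeRestricted) {σ τ : StateB}
    (h : TransGen (StepB I P) σ τ) :
    ∃ π, Simulates (TransGen (StepE I P)) σ π ∧ EquivB I π τ := by
  induction h with
  | single hστ => exact hστ.exists_simulates hP
  | tail _ hτυ ih =>
    obtain ⟨π, hσπ, hπτ⟩ := ih
    obtain ⟨π', hτπ', hπ'υ⟩ := hτυ.exists_simulates hP
    have hπ := mt hπτ.unsat_iff.1 hτυ.not_unsat
    have hππ' := (hπτ.simulates hπ).trans hτπ'
    exact ⟨π', hσπ.trans hππ', hπ'υ⟩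

theorem soundness_of_omega_bang_general (hP : P.RangeRestricted) {L₀ Pm₀ L Pm : UStore}
    {B B' : BStore} {V : Set Var}
    (h : ReflTransGen (StepB I P) ⟨L₀, Pm₀, B, V⟩ ⟨L, Pm, B', V⟩) (N : ℕ) :
    ∃ (M : ℕ) (G' : UStore),
      ReflTransGen (StepE I P) ⟨L₀ + M • Pm₀, B, V⟩ ⟨G', B', V⟩ ∧ L + N • Pm ≤ G' := by
  rcases reflTransGen_iff_eq_or_transGen.1 h with heq | h
  · cases heq
    exact ⟨N, _, .refl, le_rfl⟩
  obtain ⟨π, hsim, hπ⟩ := exists_simulates_of_transGen hP h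
  by_cases hfail : I.Unsat π.bis
  · obtain ⟨M, hM⟩ := hsim N
    obtain ⟨Q, -, hder⟩ := hM _ (.succ_nsmul_self M Pm₀)
    have hder' := transGen_stepE_of_unsat hder hfail (hπ.unsat_iff.1 hfail) (L + N • Pm)
    exact ⟨M + 1, _, hder'.to_reflTransGen, le_rfl⟩
  · obtain ⟨M, hM⟩ := hsim.trans (hπ.simulates hfail) N
    obtain ⟨Q, hQ, hder⟩ := hM _ (.succ_nsmul_self M Pm₀)
    exact ⟨M + 1, L + Q, hder.to_reflTransGen, add_le_add_right hQ.nsmul_le L⟩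

end Steps

/-! ## Statement 0: Soundness of ω! with respect to ωe -/

/-- **Soundness of ω! w.r.t. ωe.** If `⟨𝔾; ∅; 𝔹; 𝕍⟩ ↦!* ⟨𝕃; ℙ; 𝔹'; 𝕍⟩` for a
    range-restricted program `P`, then for every `N : ℕ` there is an ωe state
    `⟨𝔾'; 𝔹'; 𝕍⟩` with `⟨𝔾; 𝔹; 𝕍⟩ ↦e* ⟨𝔾'; 𝔹'; 𝕍⟩` and `𝕃 ⊎ N·ℙ ⊆ 𝔾'`. -/
theorem soundness_of_omega_bang (I : CTheory) (P : Program) (hP : P.RangeRestricted)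
    (G L Pm : UStore) (B B' : BStore) (V : Set Var)
    (h : Relation.ReflTransGen (StepB I P) ⟨G, 0, B, V⟩ ⟨L, Pm, B', V⟩) :
    ∀ N : ℕ, ∃ G' : UStore,
      Relation.ReflTransGen (StepE I P) ⟨G, B, V⟩ ⟨G', B', V⟩ ∧ L + N • Pm ≤ G' := by
  intro N
  obtain ⟨M, G', hder, hle⟩ := soundness_of_omega_bang_general hP h N
  exact ⟨G', by simpa only [smul_zero, add_zero] using hder, hle⟩
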